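/- arXiv:1804.11345 — 4 statements merged into one kernel-verified Lean document; each statement's English description precedes it below -/
import Mathlib

section
/- Let n and t be positive integers with 2 ≤ t ≤ n−1. A linear map φ from S_n^+ to S_n^+ (i.e., φ(X+Y)=φ(X)+φ(Y) and φ(cX)=cφ(X) for all X,Y ∈ S_n^+ and all scalars c ≥ 0) satisfies φ(J_n − I_n) = J_n − I_n and the condition that for all X ∈ S_n^+, α(φ(X)) = t if and only if α(X) = t, if and only if there is an n×n permutation matrix P such that φ(X) = PᵀXP for all X ∈ S_n^+. -/
open Matrix

/-- `S_n^+`: the set of `n × n` real nonnegative symmetric matrices with zero trace. -/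
def SPlus (n : ℕ) : Set (Matrix (Fin n) (Fin n) ℝ) :=
  {X | (∀ i j, 0 ≤ X i j) ∧ X.IsSymm ∧ X.trace = 0}

/-- The independence number of a square matrix: the maximum order of a principal
zero submatrix, i.e. the maximum cardinality of a set `S` of indices with
`X i j = 0` for all `i, j ∈ S`. -/
noncomputable def matIndepNum {n : ℕ} (X : Matrix (Fin n) (Fin n) ℝ) : ℕ :=
  sSup {k | ∃ S : Finset (Fin n), (∀ i ∈ S, ∀ j ∈ S, X i j = 0) ∧ S.card = k}

/-- The all-ones matrix `J_n`. -/
def allOnes (n : ℕ) : Matrix (Fin n) (Fin n) ℝ := Matrix.of fun _ _ => (1 : ℝ)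

/-!
View `X ∈ S_n^+` as a weighted graph, and write `K_e` for the single edge `e` and `C_S` for the
complement of the clique on `S`. By linearity and nonnegativity, `φ X` vanishes on `T` exactly
when `X` vanishes on every edge `e` such that `φ K_e` has an edge inside `T`. Since `α(C_S) = |S|`
for `S ≠ ∅`, the hypothesis on `α` gives, for `k = t` and `k = t + 1`, that `φ C_S` vanishes on
some `k`-set if and only if `|S| ≥ k`. Choosing such a `k`-set `π S` for each `k`-set `S` yields
an injective, hence bijective, map `π` for which every edge `f` of `φ K_e` with `f ⊆ π S`
satisfies `e ⊆ S`. As all edges lie in equally many `k`-sets, `f ⊆ π S ↔ e ⊆ S`. Hence `φ` takes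
edges to edges bijectively and preserves `k`-cliques, therefore triangles, so the bijection comes
from a permutation of the vertices. The condition `φ (J - I) = J - I` makes all weights equal to
`1`.
-/

section Incidence

open Finset MulAction Set.powersetCard
open scoped Pointwise

variable {α : Type*} {k m : ℕ}

theorem subset_of_forall_subset_powersetCard [Finite α] {s u : Finset α} (hs : #s ≤ k)
    (hk : k < Nat.card α) (h : ∀ T : Set.powersetCard α k, s ⊆ T.1 → u ⊆ T.1) : u ⊆ s := by
  classical
  have := Fintype.ofFinite α
  intro x hxu
  by_contra hxs
  have hk_erase : k ≤ #(univ.erase x) := by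
    rw [card_erase_of_mem (mem_univ x), card_univ, ← Nat.card_eq_fintype_card]
    exact Nat.le_pred_of_lt hk
  obtain ⟨T, hsT, hTx, hT⟩ :=
    exists_subsuperset_card_eq (subset_erase.2 ⟨subset_univ s, hxs⟩) hs hk_erase
  exact notMem_erase x univ (hTx (h (ofCard hT) hsT hxu))

theorem le_iff_of_monotone_of_eq_iff [Finite α] {a : Finset α → ℕ} (ha : Monotone a)
    {t : ℕ} (ht : t ≤ Nat.card α) (h : ∀ S, a S = t ↔ #S = t) (S : Finset α) :
    t ≤ a S ↔ t ≤ #S := by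
  have := Fintype.ofFinite α
  rw [Nat.card_eq_fintype_card, ← card_univ] at ht
  constructor
  · intro hta
    by_contra! hSt
    obtain ⟨T, hST, -, hT⟩ := exists_subsuperset_card_eq (subset_univ S) hSt.le ht
    exact hSt.ne ((h S).1 (((ha hST).trans_eq ((h T).2 hT)).antisymm hta))
  · intro htS
    obtain ⟨T, hTS, hT⟩ := exists_subset_card_eq htS
    exact ((h T).2 hT).symm.trans_le (ha hTS)

theorem ncard_setOf_powersetCard_superset_eq (e f : Set.powersetCard α m) :
    {S : Set.powersetCard α k | e.1 ⊆ S.1}.ncard =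
      {S : Set.powersetCard α k | f.1 ⊆ S.1}.ncard := by
  classical
  have := Set.powersetCard.isPretransitive (α := α) (n := m)
  obtain ⟨g, rfl⟩ := exists_smul_eq (Equiv.Perm α) e f
  have smul_setOf : {S : Set.powersetCard α k | (g • e).1 ⊆ S.1} =
      g • {S : Set.powersetCard α k | e.1 ⊆ S.1} := by
    ext S
    simp [Set.mem_smul_set_iff_inv_smul_mem, smul_finset_subset_iff]
  rw [smul_setOf, Set.ncard_smul_set]

theorem subset_apply_iff_of_imp [Finite α] (π : Equiv.Perm (Set.powersetCard α k))
    {e f : Set.powersetCard α m} (h : ∀ S, f.1 ⊆ (π S).1 → e.1 ⊆ S.1)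
    (S : Set.powersetCard α k) : f.1 ⊆ (π S).1 ↔ e.1 ⊆ S.1 := by
  have ncard_preimage : (π ⁻¹' {S | f.1 ⊆ S.1}).ncard =
      {S : Set.powersetCard α k | f.1 ⊆ S.1}.ncard :=
    Set.ncard_preimage_of_injective_subset_range π.injective (by simp)
  have preimage_eq : π ⁻¹' {S | f.1 ⊆ S.1} = {S | e.1 ⊆ S.1} :=
    Set.eq_of_subset_of_ncard_le h
      (ncard_preimage.trans (ncard_setOf_powersetCard_superset_eq f e)).ge
  exact Set.ext_iff.1 preimage_eq S

theorem ncard_setOf_powersetCard_subset (T : Finset α) :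
    {e : Set.powersetCard α m | e.1 ⊆ T}.ncard = (#T).choose m := by
  rw [← card_powersetCard, ← Set.ncard_coe_finset,
    ← Set.ncard_image_of_injective _ Subtype.val_injective]
  congr 1
  ext s
  simp [and_comm]

theorem choose_two_inj {a b : ℕ} (hb : 2 ≤ b) (h : a.choose 2 = b.choose 2) : a = b := by
  have ha : 2 ≤ a := by
    by_contra! ha
    exact (Nat.choose_pos hb).ne' (h ▸ Nat.choose_eq_zero_of_lt ha)
  have cast_choose_eq : (a * (a - 1) / 2 : ℚ) = b * (b - 1) / 2 := by
    rw [← Nat.cast_choose_two, ← Nat.cast_choose_two, h]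
  have sub_mul_eq_zero : ((a : ℚ) - b) * (a + b - 1) = 0 := by
    linear_combination 2 * cast_choose_eq
  have : (2 : ℚ) ≤ a := mod_cast ha
  have : (2 : ℚ) ≤ b := mod_cast hb
  have cast_eq : (a : ℚ) = b :=
    sub_eq_zero.1 ((mul_eq_zero.1 sub_mul_eq_zero).resolve_right (by linarith))
  exact mod_cast cast_eq

theorem card_union_eq_three_of_mem [DecidableEq α] {v : α} {e e' : Set.powersetCard α 2}
    (hv : v ∈ e.1) (hv' : v ∈ e'.1) (hne : e ≠ e') : #(e.1 ∪ e'.1) = 3 := by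
  have he : #e.1 = 2 := e.2
  have he' : #e'.1 = 2 := e'.2
  have : 0 < #(e.1 ∩ e'.1) := card_pos.2 ⟨v, mem_inter.2 ⟨hv, hv'⟩⟩
  have : #(e.1 ∩ e'.1) ≠ 2 := fun h ↦ hne <| Subtype.ext <|
    (eq_of_subset_of_card_le inter_subset_left (by omega)).symm.trans
      (eq_of_subset_of_card_le inter_subset_right (by omega))
  have := card_union_add_card_inter e.1 e'.1
  have := card_le_card (inter_subset_left (s₁ := e.1) (s₂ := e'.1))
  omega

theorem eq_of_mem_of_mem_of_ne {u v : α} {e e' : Set.powersetCard α 2} (huv : u ≠ v)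
    (hu : u ∈ e.1) (hv : v ∈ e.1) (hu' : u ∈ e'.1) (hv' : v ∈ e'.1) : e = e' := by
  classical
  have pair_eq {g : Set.powersetCard α 2} (hu : u ∈ g.1) (hv : v ∈ g.1) : {u, v} = g.1 :=
    eq_of_subset_of_card_le (insert_subset hu (singleton_subset_iff.2 hv))
      (g.2.trans (card_pair huv).symm).le
  exact Subtype.ext ((pair_eq hu hv).symm.trans (pair_eq hu' hv'))

/-- A permutation of the edges of the complete graph on `α` preserves `k`-cliques if it maps the
edge set of every `k`-clique onto the edge set of a `k`-clique. Edges and cliques are encoded by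
their vertex sets. -/
def PreservesCliques (ρ : Equiv.Perm (Set.powersetCard α 2)) (k : ℕ) : Prop :=
  ∀ S : Set.powersetCard α k, ∃ S' : Set.powersetCard α k, ∀ e, (ρ e).1 ⊆ S'.1 ↔ e.1 ⊆ S.1

namespace PreservesCliques

variable {ρ : Equiv.Perm (Set.powersetCard α 2)}

-- An `m`-clique is the intersection of the `k`-cliques containing it.
theorem of_le [Finite α] (h : PreservesCliques ρ k) (hk : k < Nat.card α) (hm : 2 ≤ m)
    (hmk : m ≤ k) : PreservesCliques ρ m := by
  classical
  have := Fintype.ofFinite α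
  intro S
  choose π hπ using h
  let S' : Finset α := {x | ∀ T : Set.powersetCard α k, S.1 ⊆ T.1 → x ∈ (π T).1}
  have subset_iff (e : Set.powersetCard α 2) : (ρ e).1 ⊆ S' ↔ e.1 ⊆ S.1 := calc
    (ρ e).1 ⊆ S' ↔ ∀ T : Set.powersetCard α k, S.1 ⊆ T.1 → (ρ e).1 ⊆ (π T).1 := by
      simp only [S', Finset.subset_iff, mem_filter, mem_univ, true_and]
      tauto
    _ ↔ ∀ T : Set.powersetCard α k, S.1 ⊆ T.1 → e.1 ⊆ T.1 := by simp only [hπ]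
    _ ↔ e.1 ⊆ S.1 := ⟨subset_of_forall_subset_powersetCard (S.2.trans_le hmk) hk,
      fun heS T hST ↦ heS.trans hST⟩
  have card_S' : #S' = m := by
    have preimage_eq : ρ ⁻¹' {e | e.1 ⊆ S'} = {e | e.1 ⊆ S.1} := Set.ext subset_iff
    apply choose_two_inj hm
    rw [← ncard_setOf_powersetCard_subset, ← S.2, ← ncard_setOf_powersetCard_subset S.1,
      ← preimage_eq, Set.ncard_preimage_of_injective_subset_range ρ.injective (by simp)]
  exact ⟨ofCard card_S', subset_iff⟩

section Three

variable [DecidableEq α] (h : PreservesCliques ρ 3) {v : α} {e e' : Set.powersetCard α 2}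
include h

theorem card_union_apply_eq_three (hv : v ∈ e.1) (hv' : v ∈ e'.1) (hne : e ≠ e') :
    #((ρ e).1 ∪ (ρ e').1) = 3 ∧ ∀ g, (ρ g).1 ⊆ (ρ e).1 ∪ (ρ e').1 ↔ g.1 ⊆ e.1 ∪ e'.1 := by
  obtain ⟨T, hT⟩ := h (ofCard (card_union_eq_three_of_mem hv hv' hne))
  have union_subset : (ρ e).1 ∪ (ρ e').1 ⊆ T.1 :=
    union_subset ((hT e).2 subset_union_left) ((hT e').2 subset_union_right)
  have two_lt_card : 2 < #((ρ e).1 ∪ (ρ e').1) := by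
    refine (ρ e).2.symm.trans_lt (card_lt_card ?_)
    refine left_lt_sup.2 fun hsub ↦ hne <| ρ.injective <| Subtype.ext ?_
    exact (eq_of_subset_of_card_le hsub ((ρ e).2.trans (ρ e').2.symm).le).symm
  have union_eq : (ρ e).1 ∪ (ρ e').1 = T.1 :=
    eq_of_subset_of_card_le union_subset (T.2.trans_le two_lt_card)
  rw [union_eq]
  exact ⟨T.2, hT⟩

theorem card_inter_apply_eq_one (hv : v ∈ e.1) (hv' : v ∈ e'.1) (hne : e ≠ e') :
    #((ρ e).1 ∩ (ρ e').1) = 1 := by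
  have he : #(ρ e).1 = 2 := (ρ e).2
  have he' : #(ρ e').1 = 2 := (ρ e').2
  have := (h.card_union_apply_eq_three hv hv' hne).1
  have := card_union_add_card_inter (ρ e).1 (ρ e').1
  omega

end Three

variable {v w : α} {e e' g : Set.powersetCard α 2}

-- Otherwise `ρ g` meets `ρ e` and `ρ e'` in distinct points, so `ρ e`, `ρ e'`, `ρ g` form a
-- triangle, and hence so do `e`, `e'`, `g`.
theorem mem_apply_of_mem_inter (h : PreservesCliques ρ 3) (hv : v ∈ e.1) (hv' : v ∈ e'.1)
    (hvg : v ∈ g.1) (hne : e ≠ e') (hw : w ∈ (ρ e).1) (hw' : w ∈ (ρ e').1) : w ∈ (ρ g).1 := by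
  classical
  by_contra hwg
  have hge : g ≠ e := by rintro rfl; exact hwg hw
  have hge' : g ≠ e' := by rintro rfl; exact hwg hw'
  obtain ⟨x, hx⟩ := card_eq_one.1 (h.card_inter_apply_eq_one hvg hv hge)
  obtain ⟨y, hy⟩ := card_eq_one.1 (h.card_inter_apply_eq_one hvg hv' hge')
  obtain ⟨hxg, hxe⟩ := mem_inter.1 (hx ▸ mem_singleton_self x)
  obtain ⟨hyg, hye'⟩ := mem_inter.1 (hy ▸ mem_singleton_self y)
  have hxy : x ≠ y := by
    rintro rfl
    have hwx : w = x := card_le_one.1 (h.card_inter_apply_eq_one hv hv' hne).le w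
      (mem_inter.2 ⟨hw, hw'⟩) x (mem_inter.2 ⟨hxe, hye'⟩)
    exact hwg (hwx ▸ hxg)
  have apply_g_eq : {x, y} = (ρ g).1 :=
    eq_of_subset_of_card_le (insert_subset hxg (singleton_subset_iff.2 hyg))
      ((ρ g).2.trans (card_pair hxy).symm).le
  have g_subset : g.1 ⊆ e.1 ∪ e'.1 := by
    rw [← (h.card_union_apply_eq_three hv hv' hne).2, ← apply_g_eq]
    exact insert_subset (mem_union_left _ hxe) (singleton_subset_iff.2 (mem_union_right _ hye'))
  obtain ⟨u, hug, huv⟩ := exists_mem_ne (one_lt_two.trans_eq g.2.symm) v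
  rcases mem_union.1 (g_subset hug) with hue | hue'
  · exact hge (eq_of_mem_of_mem_of_ne huv hug hvg hue hv)
  · exact hge' (eq_of_mem_of_mem_of_ne huv hug hvg hue' hv')

theorem exists_forall_mem_apply (h : PreservesCliques ρ 3) (hα : 3 ≤ ENat.card α) (v : α) :
    ∃ w, ∀ e : Set.powersetCard α 2, v ∈ e.1 → w ∈ (ρ e).1 := by
  classical
  obtain ⟨a, hav, -⟩ := ENat.exists_ne_ne_of_three_le hα v v
  obtain ⟨b, hbv, hba⟩ := ENat.exists_ne_ne_of_three_le hα v a
  let e : Set.powersetCard α 2 := ofCard (card_pair hav)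
  let e' : Set.powersetCard α 2 := ofCard (card_pair hbv)
  have hve : v ∈ e.1 := mem_insert_of_mem (mem_singleton_self v)
  have hve' : v ∈ e'.1 := mem_insert_of_mem (mem_singleton_self v)
  have hne : e ≠ e' := fun hee' ↦ by
    have : b ∈ e.1 := hee' ▸ mem_insert_self b {v}
    simp [e, ofCard, hba, hbv] at this
  obtain ⟨w, hw⟩ := card_eq_one.1 (h.card_inter_apply_eq_one hve hve' hne)
  obtain ⟨hwe, hwe'⟩ := mem_inter.1 (hw ▸ mem_singleton_self w)
  exact ⟨w, fun g hvg ↦ h.mem_apply_of_mem_inter hve hve' hvg hne hwe hwe'⟩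

-- If `σ u = σ v` and `x` is a third point, the edge opposite to `σ u` in the image of the triangle
-- `u v x` has no preimage, as every side of `u v x` contains `u` or `v`.
theorem injective_of_forall_mem_apply (h : PreservesCliques ρ 3) (hα : 3 ≤ ENat.card α)
    {σ : α → α} (hσ : ∀ v (e : Set.powersetCard α 2), v ∈ e.1 → σ v ∈ (ρ e).1) :
    Function.Injective σ := by
  classical
  intro u v huv
  by_contra hne
  obtain ⟨x, hxu, hxv⟩ := ENat.exists_ne_ne_of_three_le hα u v
  obtain ⟨T, hT⟩ := h (ofCard (card_eq_three.2 ⟨u, v, x, hne, hxu.symm, hxv.symm, rfl⟩))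
  have hσT : σ u ∈ T.1 := (hT (ofCard (card_pair hne))).2
    (by simp [ofCard, insert_subset_iff]) (hσ u _ (mem_insert_self u {v}))
  let f : Set.powersetCard α 2 := ofCard (s := T.1.erase (σ u)) <| by
    rw [card_erase_of_mem hσT, T.2]
  have hσf : σ u ∉ f.1 := notMem_erase (σ u) T.1
  obtain ⟨e, hef⟩ := ρ.surjective f
  have he : e.1 ⊆ {u, v, x} := (hT e).1 (hef ▸ erase_subset (σ u) T.1)
  obtain ⟨y, hye, hyx⟩ := exists_mem_ne (one_lt_two.trans_eq e.2.symm) x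
  have hσy : σ y = σ u := by
    rcases mem_insert.1 (he hye) with rfl | hy
    · rfl
    · rcases mem_insert.1 hy with rfl | hy
      · exact huv.symm
      · exact absurd (mem_singleton.1 hy) hyx
  exact hσf (hσy ▸ hef ▸ hσ y e hye)

theorem exists_perm_smul_eq [Finite α] [DecidableEq α] (h : PreservesCliques ρ 3)
    (hα : 3 ≤ ENat.card α) : ∃ σ : Equiv.Perm α, ∀ e, ρ e = σ • e := by
  choose σ hσ using h.exists_forall_mem_apply hα
  have hσ_inj := h.injective_of_forall_mem_apply hα hσ
  refine ⟨Equiv.ofBijective σ (Finite.injective_iff_bijective.1 hσ_inj), fun e ↦ ?_⟩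
  refine (eq_iff_subset.2 ?_).symm
  rw [Set.powersetCard.coe_smul]
  exact image_subset_iff.2 fun v hv ↦ hσ v e hv

end PreservesCliques

theorem exists_perm_forall_rel {β : Type*} [Finite β] {R : β → β → Prop}
    (hsurj : ∀ b, ∃ a, R a b) (huniq : Relator.RightUnique R) :
    ∃ ρ : Equiv.Perm β, ∀ a, R a (ρ a) := by
  choose τ hτ using hsurj
  have hτ_inj : Function.Injective τ := fun b b' hbb' ↦ huniq (hτ b) (hbb' ▸ hτ b')
  let τ' := Equiv.ofBijective τ (Finite.injective_iff_bijective.1 hτ_inj)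
  refine ⟨τ'.symm, fun a ↦ ?_⟩
  have apply_symm_apply : τ (τ'.symm a) = a := τ'.apply_symm_apply a
  simpa only [apply_symm_apply] using hτ (τ'.symm a)

/-- A relation `R` between edges of the complete graph on `α` pulls back `k`-cliques if some
permutation `π` of the `k`-subsets of `α` has the property that, whenever `R e f` and `f` lies in
`π S`, the edge `e` lies in `S`. -/
def PullsBackCliques (R : Set.powersetCard α 2 → Set.powersetCard α 2 → Prop) (k : ℕ) : Prop :=
  ∃ π : Equiv.Perm (Set.powersetCard α k), ∀ e f, R e f → ∀ S, f.1 ⊆ (π S).1 → e.1 ⊆ S.1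

namespace PullsBackCliques

variable [Finite α] {R : Set.powersetCard α 2 → Set.powersetCard α 2 → Prop}

theorem of_exists_iff (h : ∀ S : Finset α,
      (∃ T : Set.powersetCard α k, ∀ e f, R e f → f.1 ⊆ T.1 → e.1 ⊆ S) ↔ k ≤ #S) :
    PullsBackCliques R k := by
  classical
  choose π hπ using fun S : Set.powersetCard α k ↦ (h S.1).2 S.2.ge
  have hπ_inj : Function.Injective π := fun S S' hSS' ↦ by
    have k_le_card_inter : k ≤ #(S.1 ∩ S'.1) := (h (S.1 ∩ S'.1)).1
      ⟨π S, fun e f hef hf ↦ subset_inter (hπ S e f hef hf) (hπ S' e f hef (hSS' ▸ hf))⟩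
    exact Subtype.ext <|
      (eq_of_subset_of_card_le inter_subset_left (S.2.trans_le k_le_card_inter)).symm.trans
        (eq_of_subset_of_card_le inter_subset_right (S'.2.trans_le k_le_card_inter))
  exact ⟨Equiv.ofBijective π (Finite.injective_iff_bijective.1 hπ_inj),
    fun e f hef S ↦ hπ S e f hef⟩

theorem rightUnique (h : PullsBackCliques R k) (h2 : 2 ≤ k) (hk : k < Nat.card α) :
    Relator.RightUnique R := by
  obtain ⟨π, hπ⟩ := h
  intro e f f' hf hf'
  have apply_iff (S) : f.1 ⊆ (π S).1 ↔ f'.1 ⊆ (π S).1 := by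
    rw [subset_apply_iff_of_imp π (hπ e f hf), subset_apply_iff_of_imp π (hπ e f' hf')]
  refine eq_iff_subset.2 (subset_of_forall_subset_powersetCard (f'.2.trans_le h2) hk fun T ↦ ?_)
  obtain ⟨S, rfl⟩ := π.surjective T
  exact (apply_iff S).2

theorem preservesCliques (h : PullsBackCliques R k) {ρ : Equiv.Perm (Set.powersetCard α 2)}
    (hρ : ∀ e, R e (ρ e)) : PreservesCliques ρ k := by
  obtain ⟨π, hπ⟩ := h
  exact fun S ↦ ⟨π S, fun e ↦ subset_apply_iff_of_imp π (hπ e (ρ e) (hρ e)) S⟩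

-- Both sizes are needed when `t = 2`, since then only the `(t + 1)`-cliques carry information.
theorem exists_perm_smul_eq [DecidableEq α] {t : ℕ} (h : PullsBackCliques R t)
    (h' : PullsBackCliques R (t + 1)) (ht : 2 ≤ t) (htα : t < Nat.card α)
    (hsurj : ∀ f, ∃ e, R e f) : ∃ σ : Equiv.Perm α, ∀ e f, R e f → f = σ • e := by
  have huniq := h.rightUnique ht htα
  obtain ⟨ρ, hρ⟩ := exists_perm_forall_rel hsurj huniq
  have preserves_three : PreservesCliques ρ 3 := by
    rcases ht.eq_or_lt with rfl | ht3
    · exact h'.preservesCliques hρ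
    · exact (h.preservesCliques hρ).of_le htα (Nat.le_succ 2) ht3
  have hα : 3 ≤ ENat.card α := by
    rw [ENat.card_eq_coe_natCard]
    exact mod_cast ht.trans_lt htα
  obtain ⟨σ, hσ⟩ := preserves_three.exists_perm_smul_eq hα
  exact ⟨σ, fun e f hef ↦ (huniq hef (hρ e)).trans (hσ e)⟩

end PullsBackCliques

end Incidence

section LinearMaps

open Finset MulAction Set.powersetCard
open scoped Pointwise

section VanishesOn

/-- The principal submatrix of `X` indexed by `S` is zero. The cardinalities of such sets `S` are
those over which `matIndepNum` takes a maximum. -/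
def VanishesOn {ι R : Type*} [Zero R] (X : Matrix ι ι R) (S : Finset ι) : Prop :=
  ∀ i ∈ S, ∀ j ∈ S, X i j = 0

theorem VanishesOn.mono {ι R : Type*} [Zero R] {X : Matrix ι ι R} {S T : Finset ι}
    (h : VanishesOn X T) (hST : S ⊆ T) : VanishesOn X S :=
  fun i hi j hj ↦ h i (hST hi) j (hST hj)

theorem vanishesOn_adjMatrix_iff {ι R : Type*} [Zero R] [One R] [NeZero (1 : R)]
    {G : SimpleGraph ι} [DecidableRel G.Adj] {S : Finset ι} :
    VanishesOn (G.adjMatrix R) S ↔ G.IsIndepSet S := by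
  simp only [VanishesOn, SimpleGraph.adjMatrix_apply, ite_eq_right_iff, one_ne_zero, imp_false]
  exact ⟨fun h i hi j hj _ ↦ h i hi j hj, fun h i hi j hj hij ↦ h hi hj hij.ne hij⟩

theorem le_matIndepNum_iff {n k : ℕ} {X : Matrix (Fin n) (Fin n) ℝ} :
    k ≤ matIndepNum X ↔ ∃ S : Set.powersetCard (Fin n) k, VanishesOn X S.1 := by
  have bddAbove : BddAbove {k | ∃ S : Finset (Fin n), VanishesOn X S ∧ #S = k} := by
    refine ⟨n, ?_⟩
    rintro _ ⟨S, -, rfl⟩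
    exact card_finset_fin_le S
  have nonempty : {k | ∃ S : Finset (Fin n), VanishesOn X S ∧ #S = k}.Nonempty :=
    ⟨0, ∅, by simp [VanishesOn], card_empty⟩
  constructor
  · intro h
    obtain ⟨S, hS, hcard⟩ := Nat.sSup_mem nonempty bddAbove
    obtain ⟨T, hTS, hT⟩ := exists_subset_card_eq (h.trans_eq hcard.symm)
    exact ⟨ofCard hT, hS.mono hTS⟩
  · rintro ⟨S, hS⟩
    exact le_csSup bddAbove ⟨S.1, hS, S.2⟩

theorem matIndepNum_submatrix_perm {n : ℕ} (X : Matrix (Fin n) (Fin n) ℝ)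
    (σ : Equiv.Perm (Fin n)) : matIndepNum (X.submatrix σ σ) = matIndepNum X := by
  have submatrix_le (X : Matrix (Fin n) (Fin n) ℝ) (σ : Equiv.Perm (Fin n)) :
      matIndepNum (X.submatrix σ σ) ≤ matIndepNum X := by
    obtain ⟨S, hS⟩ := le_matIndepNum_iff.1 (le_refl (matIndepNum (X.submatrix σ σ)))
    refine le_matIndepNum_iff.2 ⟨σ • S, ?_⟩
    rw [Set.powersetCard.coe_smul]
    exact forall_mem_image.2 fun i hi ↦ forall_mem_image.2 fun j hj ↦ hS i hi j hj
  refine (submatrix_le X σ).antisymm ?_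
  simpa using submatrix_le (X.submatrix σ σ) σ.symm

end VanishesOn

section CliqueGraph

variable {α : Type*}

/-- The graph on `α` whose edges are the pairs of distinct elements of `S`. When `#S = 2` it has the
single edge `S`; the adjacency matrix of its complement tests which principal submatrices of an
image of a linear map vanish. -/
def cliqueGraph (S : Finset α) : SimpleGraph α where
  Adj i j := i ≠ j ∧ i ∈ S ∧ j ∈ S
  symm := ⟨fun _ _ h ↦ ⟨h.1.symm, h.2.symm⟩⟩
  loopless := ⟨fun _ h ↦ h.1 rfl⟩

instance [DecidableEq α] (S : Finset α) : DecidableRel (cliqueGraph S).Adj :=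
  fun i j ↦ inferInstanceAs (Decidable (i ≠ j ∧ i ∈ S ∧ j ∈ S))

theorem isIndepSet_compl_cliqueGraph_iff {S T : Finset α} (hT : 2 ≤ #T) :
    (cliqueGraph S)ᶜ.IsIndepSet T ↔ T ⊆ S := by
  rw [SimpleGraph.isIndepSet_compl]
  refine ⟨fun h i hi ↦ ?_, fun h i hi j hj hij ↦ ⟨hij, h hi, h hj⟩⟩
  obtain ⟨j, hj, hji⟩ := exists_mem_ne hT i
  exact (h hi hj hji.symm).2.1

theorem le_matIndepNum_compl_cliqueGraph_iff {n k : ℕ} {S : Finset (Fin n)} (hk : 2 ≤ k) :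
    k ≤ matIndepNum ((cliqueGraph S)ᶜ.adjMatrix ℝ) ↔ k ≤ #S := by
  simp only [le_matIndepNum_iff, vanishesOn_adjMatrix_iff]
  constructor
  · rintro ⟨T, hT⟩
    rw [← T.2]
    exact card_le_card ((isIndepSet_compl_cliqueGraph_iff (hk.trans_eq T.2.symm)).1 hT)
  · intro hkS
    obtain ⟨T, hTS, hT⟩ := exists_subset_card_eq hkS
    exact ⟨ofCard hT, (isIndepSet_compl_cliqueGraph_iff (hk.trans_eq hT.symm)).2 hTS⟩

theorem matIndepNum_compl_cliqueGraph_eq_iff {n t : ℕ} {S : Finset (Fin n)} (ht : 2 ≤ t) :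
    matIndepNum ((cliqueGraph S)ᶜ.adjMatrix ℝ) = t ↔ #S = t := by
  have := le_matIndepNum_compl_cliqueGraph_iff (S := S) ht
  have := le_matIndepNum_compl_cliqueGraph_iff (S := S) (Nat.le_succ_of_le ht)
  omega

end CliqueGraph

section EdgeWeight

variable {n : ℕ} {X : Matrix (Fin n) (Fin n) ℝ}

theorem apply_self_of_mem_SPlus (hX : X ∈ SPlus n) (i : Fin n) : X i i = 0 :=
  (sum_eq_zero_iff_of_nonneg fun i _ ↦ hX.1 i i).1 hX.2.2 i (mem_univ i)

theorem add_mem_SPlus {Y : Matrix (Fin n) (Fin n) ℝ} (hX : X ∈ SPlus n) (hY : Y ∈ SPlus n) :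
    X + Y ∈ SPlus n :=
  ⟨fun i j ↦ add_nonneg (hX.1 i j) (hY.1 i j), hX.2.1.add hY.2.1, by
    rw [trace_add, hX.2.2, hY.2.2, add_zero]⟩

theorem smul_mem_SPlus {c : ℝ} (hc : 0 ≤ c) (hX : X ∈ SPlus n) : c • X ∈ SPlus n :=
  ⟨fun i j ↦ mul_nonneg hc (hX.1 i j), hX.2.1.smul c, by rw [trace_smul, hX.2.2, smul_zero]⟩

theorem sum_mem_SPlus {β : Type*} {s : Finset β} {f : β → Matrix (Fin n) (Fin n) ℝ}
    (hf : ∀ b ∈ s, f b ∈ SPlus n) : ∑ b ∈ s, f b ∈ SPlus n :=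
  sum_induction f (· ∈ SPlus n) (fun _ _ ↦ add_mem_SPlus)
    ⟨fun _ _ ↦ le_rfl, isSymm_zero, trace_zero ..⟩ hf

theorem adjMatrix_mem_SPlus (G : SimpleGraph (Fin n)) [DecidableRel G.Adj] :
    G.adjMatrix ℝ ∈ SPlus n := by
  refine ⟨fun i j ↦ ?_, G.isSymm_adjMatrix, G.trace_adjMatrix ℝ⟩
  rw [SimpleGraph.adjMatrix_apply]
  positivity

theorem allOnes_sub_one_eq_adjMatrix_top :
    allOnes n - 1 = (⊤ : SimpleGraph (Fin n)).adjMatrix ℝ := by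
  rw [SimpleGraph.adjMatrix_top]
  ext i j
  by_cases hij : i = j <;> simp [allOnes, hij]

theorem allOnes_sub_one_apply_of_ne {i j : Fin n} (hij : i ≠ j) : (allOnes n - 1) i j = 1 := by
  simp [allOnes, hij]

theorem allOnes_sub_one_mem_SPlus : allOnes n - 1 ∈ SPlus n :=
  allOnes_sub_one_eq_adjMatrix_top (n := n) ▸ adjMatrix_mem_SPlus ⊤

/-- The weight of the edge `e = {i, j}` in the weighted graph with adjacency matrix `X`, namely the
common value of `X i j` and `X j i` when `X` is symmetric with zero diagonal. -/
noncomputable def edgeWeight (X : Matrix (Fin n) (Fin n) ℝ) (e : Finset (Fin n)) : ℝ :=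
  (∑ i ∈ e, ∑ j ∈ e, X i j) / 2

theorem edgeWeight_nonneg (hX : X ∈ SPlus n) (e : Finset (Fin n)) : 0 ≤ edgeWeight X e :=
  div_nonneg (sum_nonneg fun i _ ↦ sum_nonneg fun j _ ↦ hX.1 i j) zero_le_two

theorem edgeWeight_eq_zero_iff (hX : X ∈ SPlus n) {e : Finset (Fin n)} :
    edgeWeight X e = 0 ↔ VanishesOn X e := by
  rw [edgeWeight, div_eq_zero_iff, or_iff_left two_ne_zero,
    sum_eq_zero_iff_of_nonneg fun i _ ↦ sum_nonneg fun j _ ↦ hX.1 i j]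
  exact forall₂_congr fun i _ ↦ sum_eq_zero_iff_of_nonneg fun j _ ↦ hX.1 i j

theorem edgeWeight_eq_apply (hX : X ∈ SPlus n) {i j : Fin n} (hij : i ≠ j)
    {e : Set.powersetCard (Fin n) 2} (hi : i ∈ e.1) (hj : j ∈ e.1) : edgeWeight X e.1 = X i j := by
  have he : e = ofCard (card_pair hij) := eq_of_mem_of_mem_of_ne hij hi hj (by simp) (by simp)
  rw [he, val_ofCard, edgeWeight, sum_pair hij, sum_pair hij, sum_pair hij,
    apply_self_of_mem_SPlus hX, apply_self_of_mem_SPlus hX, hX.2.1.apply i j]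
  ring

theorem sum_edgeWeight_smul_adjMatrix (hX : X ∈ SPlus n) :
    ∑ e : Set.powersetCard (Fin n) 2, edgeWeight X e.1 • (cliqueGraph e.1).adjMatrix ℝ = X := by
  ext i j
  simp only [Matrix.sum_apply, Matrix.smul_apply, SimpleGraph.adjMatrix_apply, smul_eq_mul,
    mul_ite, mul_one, mul_zero]
  rcases eq_or_ne i j with rfl | hij
  · simp [apply_self_of_mem_SPlus hX]
  let e : Set.powersetCard (Fin n) 2 := ofCard (card_pair hij)
  have hi : i ∈ e.1 := mem_insert_self i {j}
  have hj : j ∈ e.1 := mem_insert_of_mem (mem_singleton_self j)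
  rw [sum_eq_single e]
  · rw [if_pos ⟨hij, hi, hj⟩, edgeWeight_eq_apply hX hij hi hj]
  · exact fun e' _ hne ↦ if_neg fun h ↦ hne (eq_of_mem_of_mem_of_ne hij h.2.1 h.2.2 hi hj)
  · simp

theorem vanishesOn_iff_forall_subset (hX : X ∈ SPlus n) {T : Finset (Fin n)} :
    VanishesOn X T ↔ ∀ f : Set.powersetCard (Fin n) 2, f.1 ⊆ T → VanishesOn X f.1 := by
  refine ⟨fun h f hf ↦ h.mono hf, fun h i hi j hj ↦ ?_⟩
  rcases eq_or_ne i j with rfl | hij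
  · exact apply_self_of_mem_SPlus hX i
  · exact h (ofCard (card_pair hij)) (insert_subset hi (singleton_subset_iff.2 hj))
      i (by simp) j (by simp)

end EdgeWeight

/-- The maps `φ` that restrict to an additive, positively homogeneous self-map of `SPlus n`. -/
structure IsSPlusLinear {n : ℕ} (φ : Matrix (Fin n) (Fin n) ℝ → Matrix (Fin n) (Fin n) ℝ) :
    Prop where
  mapsTo : ∀ X ∈ SPlus n, φ X ∈ SPlus n
  map_add : ∀ X ∈ SPlus n, ∀ Y ∈ SPlus n, φ (X + Y) = φ X + φ Y
  map_smul : ∀ c : ℝ, 0 ≤ c → ∀ X ∈ SPlus n, φ (c • X) = c • φ X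

/-- The edge `f` occurs in the weighted graph that `φ` assigns to the single edge `e`. -/
def EdgeRel {n : ℕ} (φ : Matrix (Fin n) (Fin n) ℝ → Matrix (Fin n) (Fin n) ℝ)
    (e f : Set.powersetCard (Fin n) 2) : Prop :=
  ¬VanishesOn (φ ((cliqueGraph e.1).adjMatrix ℝ)) f.1

namespace IsSPlusLinear

variable {n : ℕ} {φ : Matrix (Fin n) (Fin n) ℝ → Matrix (Fin n) (Fin n) ℝ}

theorem map_sum (h : IsSPlusLinear φ) {β : Type*} {s : Finset β}
    {f : β → Matrix (Fin n) (Fin n) ℝ} (hf : ∀ b ∈ s, f b ∈ SPlus n) :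
    φ (∑ b ∈ s, f b) = ∑ b ∈ s, φ (f b) := by
  classical
  induction s using Finset.induction_on with
  | empty =>
    simpa using h.map_smul 0 le_rfl 0 (by simpa using sum_mem_SPlus (s := ∅) (f := f) (by simp))
  | insert b s hb ih =>
    have hs := fun c hc ↦ hf c (mem_insert_of_mem hc)
    rw [sum_insert hb, sum_insert hb, h.map_add _ (hf b (mem_insert_self b s)) _ (sum_mem_SPlus hs),
      ih hs]

theorem apply_eq_sum (h : IsSPlusLinear φ) {X : Matrix (Fin n) (Fin n) ℝ} (hX : X ∈ SPlus n)
    (i j : Fin n) : φ X i j = ∑ e : Set.powersetCard (Fin n) 2,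
      edgeWeight X e.1 * φ ((cliqueGraph e.1).adjMatrix ℝ) i j := by
  have smul_mem (e : Set.powersetCard (Fin n) 2) :=
    smul_mem_SPlus (edgeWeight_nonneg hX e.1) (adjMatrix_mem_SPlus (cliqueGraph e.1))
  have map_eq : φ X = ∑ e : Set.powersetCard (Fin n) 2,
      edgeWeight X e.1 • φ ((cliqueGraph e.1).adjMatrix ℝ) := by
    conv_lhs => rw [← sum_edgeWeight_smul_adjMatrix hX, h.map_sum fun e _ ↦ smul_mem e]
    exact sum_congr rfl fun e _ ↦
      h.map_smul _ (edgeWeight_nonneg hX e.1) _ (adjMatrix_mem_SPlus _)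
  simp only [map_eq, Matrix.sum_apply, Matrix.smul_apply, smul_eq_mul]

theorem vanishesOn_map_iff (h : IsSPlusLinear φ) {X : Matrix (Fin n) (Fin n) ℝ} (hX : X ∈ SPlus n)
    {T : Finset (Fin n)} :
    VanishesOn (φ X) T ↔ ∀ e f, EdgeRel φ e f → f.1 ⊆ T → VanishesOn X e.1 := by
  have map_mem (e : Set.powersetCard (Fin n) 2) :=
    h.mapsTo _ (adjMatrix_mem_SPlus (cliqueGraph e.1))
  have apply_eq_zero_iff (i j : Fin n) : φ X i j = 0 ↔ ∀ e : Set.powersetCard (Fin n) 2,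
      VanishesOn X e.1 ∨ φ ((cliqueGraph e.1).adjMatrix ℝ) i j = 0 := by
    rw [h.apply_eq_sum hX, sum_eq_zero_iff_of_nonneg fun e _ ↦
      mul_nonneg (edgeWeight_nonneg hX e.1) ((map_mem e).1 i j)]
    simp only [mem_univ, true_imp_iff, mul_eq_zero, edgeWeight_eq_zero_iff hX]
  calc VanishesOn (φ X) T
    _ ↔ ∀ e : Set.powersetCard (Fin n) 2,
        VanishesOn X e.1 ∨ VanishesOn (φ ((cliqueGraph e.1).adjMatrix ℝ)) T := by
      simp only [VanishesOn, apply_eq_zero_iff, ← forall_or_left]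
      exact ⟨fun h e i hi j hj ↦ h i hi j hj e, fun h i hi j hj e ↦ h e i hi j hj⟩
    _ ↔ ∀ e f, EdgeRel φ e f → f.1 ⊆ T → VanishesOn X e.1 := by
      refine forall_congr' fun e ↦ ?_
      rw [vanishesOn_iff_forall_subset (map_mem e), ← forall_or_left]
      refine forall_congr' fun f ↦ ?_
      unfold EdgeRel
      tauto

theorem le_matIndepNum_map_iff (h : IsSPlusLinear φ) (k : ℕ) (S : Finset (Fin n)) :
    k ≤ matIndepNum (φ ((cliqueGraph S)ᶜ.adjMatrix ℝ)) ↔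
      ∃ T : Set.powersetCard (Fin n) k, ∀ e f, EdgeRel φ e f → f.1 ⊆ T.1 → e.1 ⊆ S := by
  simp only [le_matIndepNum_iff, h.vanishesOn_map_iff (adjMatrix_mem_SPlus _),
    vanishesOn_adjMatrix_iff]
  simp only [isIndepSet_compl_cliqueGraph_iff (mem_iff.1 (Subtype.prop _)).ge]

theorem monotone_matIndepNum_map (h : IsSPlusLinear φ) :
    Monotone fun S ↦ matIndepNum (φ ((cliqueGraph S)ᶜ.adjMatrix ℝ)) := by
  intro S S' hSS'
  obtain ⟨T, hT⟩ := (h.le_matIndepNum_map_iff _ S).1 le_rfl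
  exact (h.le_matIndepNum_map_iff _ S').2 ⟨T, fun e f hef hf ↦ (hT e f hef hf).trans hSS'⟩

theorem pullsBackCliques (h : IsSPlusLinear φ) {t : ℕ} (ht : 2 ≤ t) (htn : t ≤ n)
    (hα : ∀ X ∈ SPlus n, (matIndepNum (φ X) = t ↔ matIndepNum X = t)) :
    PullsBackCliques (EdgeRel φ) t ∧ PullsBackCliques (EdgeRel φ) (t + 1) := by
  have eq_iff (S : Finset (Fin n)) :
      matIndepNum (φ ((cliqueGraph S)ᶜ.adjMatrix ℝ)) = t ↔ #S = t :=
    (hα _ (adjMatrix_mem_SPlus _)).trans (matIndepNum_compl_cliqueGraph_eq_iff ht)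
  have le_iff (S : Finset (Fin n)) :
      t ≤ matIndepNum (φ ((cliqueGraph S)ᶜ.adjMatrix ℝ)) ↔ t ≤ #S :=
    le_iff_of_monotone_of_eq_iff h.monotone_matIndepNum_map (by simpa using htn) eq_iff S
  constructor <;> refine .of_exists_iff fun S ↦ (h.le_matIndepNum_map_iff _ S).symm.trans ?_
  · exact le_iff S
  · rw [Nat.add_one_le_iff, Nat.add_one_le_iff, lt_iff_le_and_ne', lt_iff_le_and_ne']
    exact and_congr (le_iff S) (eq_iff S).not

theorem exists_edgeRel (h : IsSPlusLinear φ) (hJ : φ (allOnes n - 1) = allOnes n - 1)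
    (f : Set.powersetCard (Fin n) 2) : ∃ e, EdgeRel φ e f := by
  obtain ⟨i, j, hij, hf⟩ := card_eq_two.1 f.2
  have not_vanishesOn : ¬VanishesOn (φ (allOnes n - 1)) f.1 := fun hf' ↦ by
    have apply_eq_zero := hf' i (by simp [hf]) j (by simp [hf])
    rw [hJ, allOnes_sub_one_apply_of_ne hij] at apply_eq_zero
    exact one_ne_zero apply_eq_zero
  rw [h.vanishesOn_map_iff allOnes_sub_one_mem_SPlus] at not_vanishesOn
  push Not at not_vanishesOn
  obtain ⟨e, f', hef', hf'f, -⟩ := not_vanishesOn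
  exact ⟨e, eq_iff_subset.2 hf'f ▸ hef'⟩

theorem apply_eq_mul (h : IsSPlusLinear φ) {σ : Equiv.Perm (Fin n)}
    (hσ : ∀ e f, EdgeRel φ e f → f = σ • e) {X : Matrix (Fin n) (Fin n) ℝ} (hX : X ∈ SPlus n)
    {p q : Fin n} (hpq : p ≠ q) :
    φ X (σ p) (σ q) = X p q * φ ((cliqueGraph {p, q}).adjMatrix ℝ) (σ p) (σ q) := by
  let e : Set.powersetCard (Fin n) 2 := ofCard (card_pair hpq)
  have hp : p ∈ e.1 := mem_insert_self p {q}
  have hq : q ∈ e.1 := mem_insert_of_mem (mem_singleton_self q)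
  have apply_eq_zero (e' : Set.powersetCard (Fin n) 2) (hne : e' ≠ e) :
      φ ((cliqueGraph e'.1).adjMatrix ℝ) (σ p) (σ q) = 0 := by
    by_contra hne_zero
    have edgeRel : EdgeRel φ e' (σ • e) := fun hvanish ↦
      hne_zero (hvanish _ (smul_mem_smul_finset hp) _ (smul_mem_smul_finset hq))
    exact hne (smul_left_cancel σ (hσ _ _ edgeRel)).symm
  rw [h.apply_eq_sum hX, sum_eq_single e]
  · rw [edgeWeight_eq_apply hX hpq hp hq, val_ofCard]
  · exact fun e' _ hne ↦ by rw [apply_eq_zero e' hne, mul_zero]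
  · simp

theorem eq_submatrix (h : IsSPlusLinear φ) (hJ : φ (allOnes n - 1) = allOnes n - 1)
    {σ : Equiv.Perm (Fin n)} (hσ : ∀ e f, EdgeRel φ e f → f = σ • e)
    {X : Matrix (Fin n) (Fin n) ℝ} (hX : X ∈ SPlus n) : φ X = X.submatrix σ.symm σ.symm := by
  ext i j
  obtain ⟨p, rfl⟩ := σ.surjective i
  obtain ⟨q, rfl⟩ := σ.surjective j
  rw [submatrix_apply, σ.symm_apply_apply, σ.symm_apply_apply]
  rcases eq_or_ne p q with rfl | hpq
  · rw [apply_self_of_mem_SPlus hX, apply_self_of_mem_SPlus (h.mapsTo X hX)]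
  have coeff_eq_one : φ ((cliqueGraph {p, q}).adjMatrix ℝ) (σ p) (σ q) = 1 := by
    have apply_eq := h.apply_eq_mul hσ allOnes_sub_one_mem_SPlus hpq
    rwa [hJ, allOnes_sub_one_apply_of_ne (σ.injective.ne hpq), allOnes_sub_one_apply_of_ne hpq,
      one_mul, eq_comm] at apply_eq
  rw [h.apply_eq_mul hσ hX hpq, coeff_eq_one, mul_one]

end IsSPlusLinear

theorem transpose_permMatrix_mul_mul_permMatrix {ι R : Type*} [Fintype ι] [DecidableEq ι]
    [NonAssocSemiring R] (σ : Equiv.Perm ι) (X : Matrix ι ι R) :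
    (σ.permMatrix R)ᵀ * X * σ.permMatrix R = X.submatrix σ.symm σ.symm := by
  rw [transpose_permMatrix, Equiv.Perm.permMatrix, Equiv.Perm.permMatrix,
    PEquiv.toMatrix_toPEquiv_mul, PEquiv.mul_toMatrix_toPEquiv, submatrix_submatrix]
  rfl

theorem allOnes_sub_one_submatrix {n : ℕ} (σ : Equiv.Perm (Fin n)) :
    (allOnes n - 1).submatrix σ σ = allOnes n - 1 := by
  rw [submatrix_sub, Pi.sub_apply, Pi.sub_apply, submatrix_one_equiv]
  rfl

end LinearMaps

theorem stmt0 (n t : ℕ) (ht2 : 2 ≤ t) (htn : t ≤ n - 1)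
    (φ : Matrix (Fin n) (Fin n) ℝ → Matrix (Fin n) (Fin n) ℝ)
    (hmaps : ∀ X ∈ SPlus n, φ X ∈ SPlus n)
    (hadd : ∀ X ∈ SPlus n, ∀ Y ∈ SPlus n, φ (X + Y) = φ X + φ Y)
    (hsmul : ∀ c : ℝ, 0 ≤ c → ∀ X ∈ SPlus n, φ (c • X) = c • φ X) :
    (φ (allOnes n - 1) = allOnes n - 1 ∧
        ∀ X ∈ SPlus n, (matIndepNum (φ X) = t ↔ matIndepNum X = t)) ↔
      ∃ σ : Equiv.Perm (Fin n), ∀ X ∈ SPlus n,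
        φ X = (Equiv.Perm.permMatrix ℝ σ)ᵀ * X * Equiv.Perm.permMatrix ℝ σ := by
  have hφ : IsSPlusLinear φ := ⟨hmaps, hadd, hsmul⟩
  simp only [transpose_permMatrix_mul_mul_permMatrix]
  constructor
  · rintro ⟨hJ, hα⟩
    have htn' : t < Nat.card (Fin n) := by rw [Nat.card_fin]; omega
    obtain ⟨ht, ht_succ⟩ := hφ.pullsBackCliques ht2 (by omega) hα
    obtain ⟨σ, hσ⟩ := ht.exists_perm_smul_eq ht_succ ht2 htn' (hφ.exists_edgeRel hJ)
    exact ⟨σ, fun X hX ↦ hφ.eq_submatrix hJ hσ hX⟩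
  · rintro ⟨σ, hσ⟩
    refine ⟨?_, fun X hX ↦ ?_⟩
    · rw [hσ _ allOnes_sub_one_mem_SPlus, allOnes_sub_one_submatrix]
    · rw [hσ X hX, matIndepNum_submatrix_perm]
end

section
/- Let G be a simple graph on n vertices with independence number α ≥ n/2 + 1. Then the intersection of all maximum independent sets of G has cardinality at least 2α − n. -/
/-- The independence number of a simple graph: the maximum cardinality of a set
of pairwise nonadjacent vertices. -/
noncomputable def indepNum {V : Type*} (G : SimpleGraph V) : ℕ :=
  sSup {k | ∃ s : Finset V, (∀ a ∈ s, ∀ b ∈ s, a ≠ b → ¬ G.Adj a b) ∧ s.card = k}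

/-- A set of vertices is independent if its vertices are pairwise nonadjacent. -/
def IsIndepSet' {V : Type*} (G : SimpleGraph V) (S : Set V) : Prop :=
  S.Pairwise fun a b => ¬ G.Adj a b

/-!
Let `F` be a nonempty family of maximum independent sets, `C` its intersection and `U` its union.
Every vertex of `C` lies in each member of `F`, hence no edge joins `C` to `U`. Therefore, for any
maximum independent set `S`, the set `S ∩ U ∪ C` is independent and has at most `|S|` elements;
by inclusion-exclusion this says `|C| + |U| ≤ |S ∩ C| + |S ∪ U|`. So `|C| + |U|` does not decrease
when `S` is added to `F`, and it equals `2α` when `F` has one member; moreover `|U| ≤ n`.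
-/

section IndepSets

open Set

variable {V : Type*} {G : SimpleGraph V} {S C U : Set V} {F : Set (Set V)}

/-- The cardinalities of the finite independent sets of `G`, whose supremum is `indepNum G`. They
are bounded when `G` has finite independence number; otherwise the supremum is the junk value
`0`. -/
def indepSizes (G : SimpleGraph V) : Set ℕ :=
  Finset.card '' {s : Finset V | IsIndepSet' G s}

/-- The family of maximum independent sets of `G`, whose intersection is the core of `G` and whose
union is its corona. Infinite sets have `ncard` zero, so the family is meant for graphs whose
independent sets have bounded size. -/
def maximumIndepSets (G : SimpleGraph V) : Set (Set V) :=
  {S | IsIndepSet' G S ∧ S.ncard = indepNum G}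

lemma bddAbove_indepSizes [Finite V] (G : SimpleGraph V) : BddAbove (indepSizes G) :=
  ((toFinite _).image _).bddAbove

lemma encard_le_indepNum (hG : BddAbove (indepSizes G)) (hS : IsIndepSet' G S) :
    S.encard ≤ indepNum G := by
  by_contra! hlt
  obtain ⟨T, hTS, hT⟩ := exists_subset_encard_eq (Order.add_one_le_of_lt hlt)
  lift T to Finset V using finite_of_encard_eq_coe (k := indepNum G + 1) (by exact_mod_cast hT)
  have hle : T.card ≤ indepNum G := le_csSup hG ⟨T, hS.mono hTS, rfl⟩
  have hcard : T.card = indepNum G + 1 := by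
    rw [encard_coe_eq_coe_finsetCard] at hT
    exact_mod_cast hT
  omega

lemma maximumIndepSets_nonempty (hG : BddAbove (indepSizes G)) :
    (maximumIndepSets G).Nonempty := by
  have hne : (indepSizes G).Nonempty := ⟨0, ∅, by simp [IsIndepSet'], rfl⟩
  obtain ⟨s, hs, hcard⟩ := Nat.sSup_mem hne hG
  exact ⟨s, hs, (ncard_coe_finset s).trans hcard⟩

lemma encard_eq_indepNum (hG : BddAbove (indepSizes G)) (hS : S ∈ maximumIndepSets G) :
    S.encard = indepNum G := by
  have hfin : S.Finite := finite_of_encard_le_coe (encard_le_indepNum hG hS.1)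
  rw [← hfin.cast_ncard_eq, hS.2]

lemma not_adj_of_mem_sInter_of_mem_sUnion (hF : ∀ S ∈ F, IsIndepSet' G S) :
    ∀ a ∈ ⋂₀ F, ∀ b ∈ ⋃₀ F, ¬ G.Adj a b := by
  rintro a ha b ⟨S, hSF, hb⟩ hab
  exact hF S hSF (ha S hSF) hb hab.ne hab

lemma IsIndepSet'.inter_union (hS : IsIndepSet' G S) (hCU : C ⊆ U)
    (hadj : ∀ a ∈ C, ∀ b ∈ U, ¬ G.Adj a b) : IsIndepSet' G (S ∩ U ∪ C) := by
  rintro a (ha | ha) b (hb | hb) hab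
  · exact hS ha.1 hb.1 hab
  · exact fun h => hadj b hb a ha.2 h.symm
  · exact hadj a ha b hb.2
  · exact hadj a ha b (hCU hb)

lemma encard_add_encard_le_encard_inter_add_encard_union
    (hG : BddAbove (indepSizes G)) (hS : S ∈ maximumIndepSets G) (hCU : C ⊆ U)
    (hadj : ∀ a ∈ C, ∀ b ∈ U, ¬ G.Adj a b) :
    C.encard + U.encard ≤ (S ∩ C).encard + (S ∪ U).encard := by
  have hS_card : S.encard = indepNum G := encard_eq_indepNum hG hS
  have hmax : (S ∩ U ∪ C).encard ≤ S.encard :=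
    hS_card ▸ encard_le_indepNum hG (hS.1.inter_union hCU hadj)
  have hinter : S ∩ U ∩ C = S ∩ C := by rw [inter_assoc, inter_eq_right.mpr hCU]
  have hfin : S.encard ≠ ⊤ := hS_card ▸ ENat.natCast_ne_top _
  refine (ENat.add_le_add_iff_left hfin).mp ?_
  calc
    S.encard + (C.encard + U.encard) = (S.encard + U.encard) + C.encard := by ring
    _ = (S ∪ U).encard + ((S ∩ U).encard + C.encard) := by
      rw [← encard_union_add_encard_inter S U, add_assoc]
    _ = (S ∪ U).encard + ((S ∩ U ∪ C).encard + (S ∩ C).encard) := by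
      rw [← encard_union_add_encard_inter (S ∩ U) C, hinter]
    _ ≤ (S ∪ U).encard + (S.encard + (S ∩ C).encard) := by gcongr
    _ = S.encard + ((S ∩ C).encard + (S ∪ U).encard) := by ring

lemma two_mul_indepNum_le_encard_sInter_add_encard_sUnion_of_finite
    (hG : BddAbove (indepSizes G)) (hfin : F.Finite) (hne : F.Nonempty)
    (hF : F ⊆ maximumIndepSets G) :
    2 * (indepNum G : ℕ∞) ≤ (⋂₀ F).encard + (⋃₀ F).encard := by
  induction F, hfin using Set.Finite.induction_on with
  | empty => exact absurd hne not_nonempty_empty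
  | @insert S F _ _ ih =>
    obtain ⟨hS, hF⟩ := insert_subset_iff.mp hF
    obtain rfl | hne := F.eq_empty_or_nonempty
    · simp [encard_eq_indepNum hG hS, two_mul]
    · obtain ⟨T, hT⟩ := hne
      have hCU : ⋂₀ F ⊆ ⋃₀ F := (sInter_subset_of_mem hT).trans (subset_sUnion_of_mem hT)
      have hadj := not_adj_of_mem_sInter_of_mem_sUnion fun T hT => (hF hT).1
      rw [sInter_insert, sUnion_insert]
      calc
        2 * (indepNum G : ℕ∞) ≤ (⋂₀ F).encard + (⋃₀ F).encard := ih ⟨T, hT⟩ hF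
        _ ≤ (S ∩ ⋂₀ F).encard + (S ∪ ⋃₀ F).encard :=
          encard_add_encard_le_encard_inter_add_encard_union hG hS hCU hadj

lemma two_mul_indepNum_le_encard_sInter_add_encard_sUnion
    (hG : BddAbove (indepSizes G)) (hne : F.Nonempty) (hF : F ⊆ maximumIndepSets G) :
    2 * (indepNum G : ℕ∞) ≤ (⋂₀ F).encard + (⋃₀ F).encard := by
  obtain hU | hU := (⋃₀ F).finite_or_infinite
  · have hfin : F.Finite := hU.finite_subsets.subset fun _ => subset_sUnion_of_mem
    exact two_mul_indepNum_le_encard_sInter_add_encard_sUnion_of_finite hG hfin hne hF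
  · simp [hU.encard_eq]

theorem stmt2_general (hG : BddAbove (indepSizes G)) :
    2 * (indepNum G : ℕ∞) ≤
      (⋂₀ maximumIndepSets G).encard + (⋃₀ maximumIndepSets G).encard :=
  two_mul_indepNum_le_encard_sInter_add_encard_sUnion hG (maximumIndepSets_nonempty hG) Subset.rfl

lemma two_mul_indepNum_le_ncard_sInter_add_card [Fintype V] (G : SimpleGraph V) :
    2 * indepNum G ≤ (⋂₀ maximumIndepSets G).ncard + Fintype.card V := by
  have h := stmt2_general (bddAbove_indepSizes G)
  rw [← (toFinite _).cast_ncard_eq, ← (toFinite _).cast_ncard_eq] at h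
  have hU := ncard_le_card (⋃₀ maximumIndepSets G)
  rw [Nat.card_eq_fintype_card] at hU
  norm_cast at h
  omega

end IndepSets

theorem stmt2 (n : ℕ) (V : Type*) [Fintype V] (hcard : Fintype.card V = n)
    (G : SimpleGraph V) (hα : (n : ℝ) / 2 + 1 ≤ (indepNum G : ℝ)) :
    2 * indepNum G - n ≤
      (⋂₀ {S : Set V | IsIndepSet' G S ∧ S.ncard = indepNum G}).ncard := by
  rw [← hcard]
  exact Nat.sub_le_of_le_add (two_mul_indepNum_le_ncard_sInter_add_card G)
end

section
/- Let n, t be integers with 1 ≤ t ≤ n−1. Suppose φ: 𝒢_n → 𝒢_n is a complete linear map satisfying: for all G ∈ 𝒢_n, α(φ(G)) = t if and only if α(G) = t. Then for all distinct i,j ∈ {1,...,n}, the graph φ(G_{ij}) has at least one edge. -/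
/-- `G_{ij}`: the graph whose only edge is `(i, j)`. -/
def singleEdge {V : Type*} (i j : V) : SimpleGraph V :=
  SimpleGraph.fromEdgeSet {s(i, j)}

/-- A map on graphs is linear if it preserves unions. -/
def IsLinearMap' {V : Type*} (φ : SimpleGraph V → SimpleGraph V) : Prop :=
  ∀ G H : SimpleGraph V, φ (G ⊔ H) = φ G ⊔ φ H

/-- A complete linear map: a linear map sending the complete graph to itself. -/
def IsCompleteLinearMap {V : Type*} (φ : SimpleGraph V → SimpleGraph V) : Prop :=
  IsLinearMap' φ ∧ φ ⊤ = ⊤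

/-- A vertex permutation. -/
def IsVertexPermutation {V : Type*} (φ : SimpleGraph V → SimpleGraph V) : Prop :=
  ∃ σ : Equiv.Perm V, ∀ i j : V, i ≠ j → φ (singleEdge i j) = singleEdge (σ i) (σ j)

/-- An edge permutation. -/
def IsEdgePermutation {V : Type*} (φ : SimpleGraph V → SimpleGraph V) : Prop :=
  φ ⊤ = ⊤ ∧ ∀ i j : V, i ≠ j → ((φ (singleEdge i j)).edgeSet).ncard = 1

section IndependentSets

variable {V : Type*} {G : SimpleGraph V} {i j : V}

theorem indepNum_eq_card {s : Finset V} (hs : G.IsIndepSet s)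
    (hmax : ∀ u : Finset V, G.IsIndepSet u → u.card ≤ s.card) : indepNum G = s.card :=
  IsGreatest.csSup_eq ⟨⟨s, fun _ ha _ hb hab => hs ha hb hab, rfl⟩, by
    rintro _ ⟨u, hu, rfl⟩
    exact hmax u fun a ha b hb hab => hu a ha b hb hab⟩

theorem isIndepSet_sup_singleEdge_iff (hij : i ≠ j) {u : Set V} :
    (G ⊔ singleEdge i j).IsIndepSet u ↔ G.IsIndepSet u ∧ ¬(i ∈ u ∧ j ∈ u) := by
  have hadj (a b : V) :
      (singleEdge i j).Adj a b ↔ (a = i ∧ b = j ∨ a = j ∧ b = i) ∧ a ≠ b :=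
    SimpleGraph.edge_adj i j a b
  simp only [SimpleGraph.isIndepSet_iff, Set.Pairwise, SimpleGraph.sup_adj, hadj]
  grind

end IndependentSets

section CompleteSplitGraph

variable {V : Type*}

/-- The complete split graph with independent part `S`: two distinct vertices are adjacent unless
both lie in `S`. For `S` of size `t + 1` it is the test graph on which a map preserving `α = t`
detects the presence of an edge inside `S`. -/
def completeSplitGraph (S : Set V) : SimpleGraph V :=
  SimpleGraph.fromRel fun a _ => a ∉ S

theorem isIndepSet_completeSplitGraph_iff {S u : Set V} :
    (completeSplitGraph S).IsIndepSet u ↔ u.Subsingleton ∨ u ⊆ S := by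
  simp only [SimpleGraph.isIndepSet_iff, completeSplitGraph, SimpleGraph.fromRel_adj]
  constructor
  · intro hu
    refine u.subsingleton_or_nontrivial.imp_right fun hnt a ha => ?_
    obtain ⟨b, hb, hba⟩ := hnt.exists_ne a
    by_contra haS
    exact hu ha hb hba.symm ⟨hba.symm, Or.inl haS⟩
  · rintro (hu | hu) a ha b hb hab
    · exact absurd (hu ha hb) hab
    · exact fun h => h.2.elim (· (hu ha)) (· (hu hb))

theorem indepNum_completeSplitGraph {S : Finset V} (hS : S.Nonempty) :
    indepNum (completeSplitGraph (S : Set V)) = S.card := by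
  refine indepNum_eq_card (isIndepSet_completeSplitGraph_iff.2 (Or.inr subset_rfl)) fun u hu => ?_
  rcases isIndepSet_completeSplitGraph_iff.1 hu with hsub | hsub
  · exact (Finset.card_le_one_iff_subsingleton.2 hsub).trans hS.card_pos
  · exact Finset.card_le_card (Finset.coe_subset.1 hsub)

theorem indepNum_completeSplitGraph_sup_singleEdge {S : Finset V} {i j : V} (hi : i ∈ S)
    (hj : j ∈ S) (hij : i ≠ j) :
    indepNum (completeSplitGraph (S : Set V) ⊔ singleEdge i j) + 1 = S.card := by
  classical
  have hcard : (S.erase i).card + 1 = S.card := Finset.card_erase_add_one hi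
  rw [← hcard, add_left_inj]
  apply indepNum_eq_card
  · rw [isIndepSet_sup_singleEdge_iff hij, isIndepSet_completeSplitGraph_iff]
    exact ⟨Or.inr (Finset.coe_subset.2 (S.erase_subset i)),
      fun h => Finset.notMem_erase i S h.1⟩
  · intro u hu
    rw [isIndepSet_sup_singleEdge_iff hij, isIndepSet_completeSplitGraph_iff] at hu
    obtain ⟨hsub | hsub, hnot⟩ := hu
    · have hpos : 0 < (S.erase i).card :=
        Finset.card_pos.2 ⟨j, Finset.mem_erase.2 ⟨hij.symm, hj⟩⟩
      exact (Finset.card_le_one_iff_subsingleton.2 hsub).trans hpos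
    · have hssub : u ⊂ S :=
        (Finset.coe_subset.1 hsub).ssubset_of_ne fun h => hnot (by simp [h, hi, hj])
      have hlt : u.card < S.card := Finset.card_lt_card hssub
      omega

end CompleteSplitGraph

theorem exists_finset_card_eq_of_pair_mem {V : Type*} {k : ℕ} (hk : 2 ≤ k)
    (hkV : (k : ℕ∞) ≤ ENat.card V) (i j : V) : ∃ S : Finset V, i ∈ S ∧ j ∈ S ∧ S.card = k := by
  have hpair : ({i, j} : Set V).encard ≤ k :=
    calc ({i, j} : Set V).encard
      _ ≤ ({j} : Set V).encard + 1 := Set.encard_insert_le {j} i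
      _ = 2 := by rw [Set.encard_singleton, one_add_one_eq_two]
      _ ≤ k := by exact_mod_cast hk
  obtain ⟨S, hsub, -, hcard⟩ := Set.exists_superset_subset_encard_eq
    (Set.subset_univ {i, j}) hpair (by rwa [Set.encard_univ])
  obtain ⟨S, rfl⟩ := (Set.finite_of_encard_eq_coe hcard).exists_finset_coe
  rw [Set.pair_subset_iff] at hsub
  rw [Set.encard_coe_eq_coe_finsetCard, Nat.cast_inj] at hcard
  exact ⟨S, hsub.1, hsub.2, hcard⟩

theorem exists_indepNum_eq_succ_and_sup_singleEdge_eq {V : Type*} {t : ℕ} (ht : 1 ≤ t)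
    (htV : (t : ℕ∞) < ENat.card V) {i j : V} (hij : i ≠ j) :
    ∃ G : SimpleGraph V, indepNum G = t + 1 ∧ indepNum (G ⊔ singleEdge i j) = t := by
  obtain ⟨S, hi, hj, hcard⟩ := exists_finset_card_eq_of_pair_mem (k := t + 1) (by omega)
    (by exact_mod_cast Order.add_one_le_of_lt htV) i j
  refine ⟨completeSplitGraph S, (indepNum_completeSplitGraph ⟨i, hi⟩).trans hcard, ?_⟩
  exact Nat.succ.inj ((indepNum_completeSplitGraph_sup_singleEdge hi hj hij).trans hcard)

-- For infinite `V`, a graph with arbitrarily large finite independent sets has the junk value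
-- `indepNum G = 0`, which differs from the positive number `t` just as `α(G) = ∞` does.
theorem stmt6_general {V : Type*} {t : ℕ} (ht : 1 ≤ t) (htV : (t : ℕ∞) < ENat.card V)
    {φ : SimpleGraph V → SimpleGraph V} (hφ : IsLinearMap' φ)
    (hpres : ∀ G : SimpleGraph V, indepNum (φ G) = t ↔ indepNum G = t) {i j : V} (hij : i ≠ j) :
    (φ (singleEdge i j)).edgeSet.Nonempty := by
  rw [SimpleGraph.edgeSet_nonempty]
  intro hbot
  obtain ⟨G, hG, hGe⟩ := exists_indepNum_eq_succ_and_sup_singleEdge_eq ht htV hij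
  have hφG : φ (G ⊔ singleEdge i j) = φ G := by rw [hφ, hbot, sup_bot_eq]
  have hGt : indepNum G = t := by rw [← hpres G, ← hφG, hpres, hGe]
  omega

theorem stmt6 (n t : ℕ) (ht : 1 ≤ t) (htn : t ≤ n - 1)
    (φ : SimpleGraph (Fin n) → SimpleGraph (Fin n)) (hφ : IsCompleteLinearMap φ)
    (hpres : ∀ G : SimpleGraph (Fin n), indepNum (φ G) = t ↔ indepNum G = t) :
    ∀ i j : Fin n, i ≠ j → ((φ (singleEdge i j)).edgeSet).Nonempty := by
  have htV : (t : ℕ∞) < ENat.card (Fin n) := by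
    rw [ENat.card_eq_coe_fintype_card, Fintype.card_fin]
    exact_mod_cast (by omega : t < n)
  exact fun _ _ => stmt6_general ht htV hφ.1 hpres
end

section
/- Let n, t be integers with 1 ≤ t ≤ n−1. Suppose φ: 𝒢_n → 𝒢_n is a complete linear map satisfying: for all G ∈ 𝒢_n, α(φ(G)) = t if and only if α(G) = t. Then for all distinct i,j ∈ {1,...,n}, the graph φ(G_{ij}) contains no two separate edges, i.e., any two distinct edges of φ(G_{ij}) share a common vertex. -/
/-!
A linear map `φ` preserving `α = t` also preserves both thresholds `α ≥ t` and `α ≥ t + 1`. Let `k`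
be one of `t`, `t + 1` with `2 ≤ k < |V|`; it exists unless `|V| = 2`, when there is only one
possible edge. For a `k`-set `S` let `M_S` be the largest graph in which `S` is independent. Then
`φ M_S` has an independent `k`-set `g S`, and `g` is injective, hence a permutation of the `k`-sets:
if `g S = g S'`, then `φ (M_S ⊔ M_S')` has an independent `k`-set, so `M_S ⊔ M_S'` has one, which
must be both `S` and `S'`.

If `e` is an edge of `φ G_{ij}`, then `e ⊆ g S` forces `{i, j} ⊆ S`, as otherwise `G_{ij} ≤ M_S`.
Equally many `k`-sets contain `e` as contain `{i, j}`, so the two conditions are equivalent. Hence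
any two edges of `φ G_{ij}` lie in the same `k`-sets and coincide: `φ G_{ij}` has at most one edge,
so two distinct edges, adjacent or separate, never occur.
-/

open Finset

section FinsetFamilies

variable {V : Type*} {k : ℕ} {p q : Finset V}

theorem subset_of_forall_card_eq_imp [Fintype V] (hpk : #p ≤ k) (hk : k < Fintype.card V)
    (h : ∀ T : Finset V, #T = k → p ⊆ T → q ⊆ T) : q ⊆ p := by
  classical
  intro x hxq
  by_contra hxp
  obtain ⟨T, hpT, hTx, hT⟩ : ∃ T, p ⊆ T ∧ T ⊆ univ.erase x ∧ #T = k :=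
    exists_subsuperset_card_eq (subset_erase.2 ⟨subset_univ p, hxp⟩) hpk
      (by rw [card_erase_of_mem (mem_univ x), card_univ]; exact Nat.le_sub_one_of_lt hk)
  exact notMem_erase x univ (hTx (h T hT hpT hxq))

theorem subset_map_iff_of_bijOn_powersetCard [Finite V] {g : Finset V → Finset V}
    (hg : Set.BijOn g (Set.powersetCard V k) (Set.powersetCard V k)) (hpq : #p = #q)
    (hpk : #p ≤ k) (h : ∀ S, #S = k → p ⊆ g S → q ⊆ S) {S : Finset V} (hS : #S = k) :
    p ⊆ g S ↔ q ⊆ S := by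
  classical
  cases nonempty_fintype V
  refine ⟨h S hS, fun hqS ↦ ?_⟩
  have hsubset : (powersetCard k univ).filter (p ⊆ g ·) ⊆ (powersetCard k univ).filter (q ⊆ ·) := by
    intro S hS
    rw [mem_filter, mem_powersetCard_univ] at hS ⊢
    exact ⟨hS.1, h S hS.1 hS.2⟩
  have hsurj : Set.SurjOn g ((powersetCard k univ).filter (p ⊆ g ·))
      ((powersetCard k univ).filter (p ⊆ ·)) := by
    intro T hT
    rw [mem_coe, mem_filter, mem_powersetCard_univ] at hT
    obtain ⟨S, hS, rfl⟩ := hg.surjOn hT.1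
    exact ⟨S, mem_filter.2 ⟨mem_powersetCard_univ.2 hS, hT.2⟩, rfl⟩
  have hcard : #((powersetCard k univ).filter (q ⊆ ·)) ≤
      #((powersetCard k univ).filter (p ⊆ g ·)) := calc
    _ = #((powersetCard k univ).filter (p ⊆ ·)) := by
      rw [card_filter_powersetCard_subset p univ k (subset_univ p) hpk,
        card_filter_powersetCard_subset q univ k (subset_univ q) (hpq ▸ hpk), hpq]
    _ ≤ _ := card_le_card_of_surjOn g hsurj
  have hmem : S ∈ (powersetCard k univ).filter (q ⊆ ·) :=
    mem_filter.2 ⟨mem_powersetCard_univ.2 hS, hqS⟩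
  rw [← eq_of_subset_of_card_le hsubset hcard] at hmem
  exact (mem_filter.1 hmem).2

end FinsetFamilies

section Edges

variable {V : Type*} {G : SimpleGraph V} {e f : Sym2 V}

theorem card_toFinset_of_mem_edgeSet [DecidableEq V] (he : e ∈ G.edgeSet) : #e.toFinset = 2 :=
  e.card_toFinset_of_not_isDiag (G.not_isDiag_of_mem_edgeSet he)

theorem eq_of_toFinset_subset_of_mem_edgeSet [DecidableEq V] (he : e ∈ G.edgeSet)
    (hf : f ∈ G.edgeSet) (h : e.toFinset ⊆ f.toFinset) : e = f := by
  have heq : e.toFinset = f.toFinset := eq_of_subset_of_card_le h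
    (by rw [card_toFinset_of_mem_edgeSet he, card_toFinset_of_mem_edgeSet hf])
  exact Sym2.ext fun v ↦ by rw [← Sym2.mem_toFinset, heq, Sym2.mem_toFinset]

theorem edgeSet_subsingleton_of_card_le_two [Fintype V] (h : Fintype.card V ≤ 2) :
    G.edgeSet.Subsingleton := by
  classical
  intro e he f hf
  have hf_univ : f.toFinset = univ := eq_of_subset_of_card_le (subset_univ _)
    (by rw [card_univ, card_toFinset_of_mem_edgeSet hf]; exact h)
  exact eq_of_toFinset_subset_of_mem_edgeSet he hf (hf_univ ▸ subset_univ _)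

theorem not_toFinset_subset_of_isIndepSet [DecidableEq V] {T : Finset V}
    (hT : G.IsIndepSet (T : Set V)) (he : e ∈ G.edgeSet) : ¬ e.toFinset ⊆ T := by
  induction e with
  | _ a b =>
    intro hsub
    rw [Sym2.toFinset_mk_eq, insert_subset_iff, singleton_subset_iff] at hsub
    exact hT hsub.1 hsub.2 he.ne he

end Edges

section IndepNum

variable {V : Type*}

theorem indepNum_eq_simpleGraph_indepNum (G : SimpleGraph V) : indepNum G = G.indepNum := by
  simp only [indepNum, SimpleGraph.indepNum, SimpleGraph.isNIndepSet_iff,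
    SimpleGraph.isIndepSet_iff, Set.Pairwise, mem_coe]

theorem le_indepNum_iff_exists_isNIndepSet [Finite V] {G : SimpleGraph V} {k : ℕ} :
    k ≤ G.indepNum ↔ ∃ s, G.IsNIndepSet k s := by
  constructor
  · intro hk
    obtain ⟨s, hs⟩ := G.exists_isNIndepSet_indepNum
    obtain ⟨u, hus, hu⟩ := exists_subset_card_eq (hk.trans hs.card_eq.ge)
    exact ⟨u, hs.isIndepSet.mono (coe_subset.2 hus), hu⟩
  · rintro ⟨s, hs⟩
    exact hs.card_eq ▸ hs.isIndepSet.card_le_indepNum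

theorem isIndepSet_anti {G H : SimpleGraph V} (hGH : G ≤ H) {s : Set V} (hs : H.IsIndepSet s) :
    G.IsIndepSet s :=
  hs.mono' fun _ _ hH hG ↦ hH (hGH hG)

theorem indepNum_antitone [Finite V] : Antitone (SimpleGraph.indepNum (α := V)) := by
  intro G H hGH
  obtain ⟨s, hs⟩ := H.exists_isNIndepSet_indepNum
  exact le_indepNum_iff_exists_isNIndepSet.2 ⟨s, isIndepSet_anti hGH hs.isIndepSet, hs.card_eq⟩

theorem indepNum_bot [Fintype V] : (⊥ : SimpleGraph V).indepNum = Fintype.card V := by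
  refine le_antisymm ?_ ?_
  · obtain ⟨s, hs⟩ := (⊥ : SimpleGraph V).exists_isNIndepSet_indepNum
    exact hs.card_eq ▸ s.card_le_univ
  · have huniv : (⊥ : SimpleGraph V).IsIndepSet (univ : Finset V) := fun _ _ _ _ _ ↦ id
    exact huniv.card_le_indepNum

theorem indepNum_deleteIncidenceSet_le [Finite V] (G : SimpleGraph V) (x : V) :
    (G.deleteIncidenceSet x).indepNum ≤ G.indepNum + 1 := by
  classical
  obtain ⟨s, hs⟩ := (G.deleteIncidenceSet x).exists_isNIndepSet_indepNum
  have hindep : G.IsIndepSet (s.erase x : Finset V) := by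
    intro a ha b hb hab hadj
    rw [mem_coe, mem_erase] at ha hb
    exact hs.isIndepSet ha.2 hb.2 hab
      (SimpleGraph.deleteIncidenceSet_adj.2 ⟨hadj, ha.1, hb.1⟩)
  calc (G.deleteIncidenceSet x).indepNum = #s := hs.card_eq.symm
    _ ≤ #(s.erase x) + 1 := Nat.sub_le_iff_le_add.1 pred_card_le_card_erase
    _ ≤ G.indepNum + 1 := Nat.add_le_add_right hindep.card_le_indepNum 1

/-- Deleting the edges at one vertex raises the independence number by at most one, so it cannot
jump over `t` on the way from `G` down to `⊥`. -/
theorem exists_le_indepNum_eq [Fintype V] {G : SimpleGraph V} {t : ℕ} (hG : G.indepNum ≤ t)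
    (ht : t ≤ Fintype.card V) : ∃ H ≤ G, H.indepNum = t := by
  classical
  obtain ⟨H, hHG, hmin⟩ := exists_minimal_le_of_wellFoundedLT
    (fun H : SimpleGraph V ↦ H.indepNum ≤ t) G hG
  refine ⟨H, hHG, hmin.prop.antisymm ?_⟩
  obtain rfl | hbot := eq_or_ne H ⊥
  · exact ht.trans indepNum_bot.ge
  obtain ⟨a, b, hab⟩ := SimpleGraph.ne_bot_iff_exists_adj.1 hbot
  have hlt : H.deleteIncidenceSet a < H :=
    (H.deleteIncidenceSet_le a).lt_of_not_ge fun hle ↦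
      (SimpleGraph.deleteIncidenceSet_adj.1 (hle hab)).2.1 rfl
  have hjump : t < (H.deleteIncidenceSet a).indepNum := not_le.1 (hmin.not_prop_of_lt hlt)
  exact Nat.le_of_lt_succ (hjump.trans_le (indepNum_deleteIncidenceSet_le H a))

end IndepNum

section CliqueCompl

variable {V : Type*}

/-- The complement of the complete graph on `s`: its edges are the pairs not contained in `s`. It is
the largest graph in which `s` is independent. -/
def cliqueCompl (s : Set V) : SimpleGraph V :=
  SimpleGraph.fromEdgeSet s.sym2ᶜ

theorem le_cliqueCompl_iff_isIndepSet {G : SimpleGraph V} {s : Set V} :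
    G ≤ cliqueCompl s ↔ G.IsIndepSet s := by
  constructor
  · intro hG a ha b hb _ hab
    exact (hG hab).1 (Set.mk_mem_sym2_iff.2 ⟨ha, hb⟩)
  · intro hs a b hab
    refine ⟨fun hmem ↦ ?_, hab.ne⟩
    obtain ⟨ha, hb⟩ := Set.mk_mem_sym2_iff.1 hmem
    exact hs ha hb hab.ne hab

theorem subset_of_isIndepSet_cliqueCompl {s u : Set V} (hu : u.Nontrivial)
    (h : (cliqueCompl s).IsIndepSet u) : u ⊆ s := by
  intro a ha
  obtain ⟨b, hb, hba⟩ := hu.exists_ne a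
  by_contra has
  exact h ha hb hba.symm ⟨fun hmem ↦ has (Set.mk_mem_sym2_iff.1 hmem).1, hba.symm⟩

theorem indepNum_cliqueCompl [Finite V] {s : Finset V} (hs : s.Nonempty) :
    (cliqueCompl (s : Set V)).indepNum = #s := by
  refine le_antisymm ?_ (le_cliqueCompl_iff_isIndepSet.1 le_rfl).card_le_indepNum
  obtain ⟨u, hu⟩ := (cliqueCompl (s : Set V)).exists_isNIndepSet_indepNum
  rw [← hu.card_eq]
  obtain hu_le | hu_lt := le_or_gt #u 1
  · exact hu_le.trans hs.card_pos
  · exact card_le_card (coe_subset.1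
      (subset_of_isIndepSet_cliqueCompl (one_lt_card_iff_nontrivial.1 hu_lt) hu.isIndepSet))

theorem singleEdge_le_cliqueCompl_iff {i j : V} (hij : i ≠ j) {s : Set V} :
    singleEdge i j ≤ cliqueCompl s ↔ ¬ (i ∈ s ∧ j ∈ s) := by
  simp [singleEdge, cliqueCompl, hij]

end CliqueCompl

section Thresholds

variable {V : Type*} {φ : SimpleGraph V → SimpleGraph V} {t : ℕ}

theorem le_indepNum_map_of_le [Finite V] (hφ : Monotone φ)
    (hpres : ∀ G, (φ G).indepNum = t ↔ G.indepNum = t) (ht : 1 ≤ t) {G : SimpleGraph V}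
    (hG : t ≤ G.indepNum) : t ≤ (φ G).indepNum := by
  obtain ⟨s, hs⟩ := le_indepNum_iff_exists_isNIndepSet.1 hG
  have hα : (cliqueCompl (s : Set V)).indepNum = t := by
    rw [indepNum_cliqueCompl (card_pos.1 (hs.card_eq ▸ ht)), hs.card_eq]
  exact ((hpres _).2 hα).ge.trans
    (indepNum_antitone (hφ (le_cliqueCompl_iff_isIndepSet.2 hs.isIndepSet)))

theorem lt_indepNum_map_iff [Fintype V] (hφ : Monotone φ)
    (hpres : ∀ G, (φ G).indepNum = t ↔ G.indepNum = t) (ht : 1 ≤ t) (htV : t ≤ Fintype.card V)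
    {G : SimpleGraph V} : t < (φ G).indepNum ↔ t < G.indepNum := by
  constructor
  · contrapose!
    intro hG
    obtain ⟨H, hHG, hH⟩ := exists_le_indepNum_eq hG htV
    exact (indepNum_antitone (hφ hHG)).trans ((hpres H).2 hH).le
  · intro hG
    exact (le_indepNum_map_of_le hφ hpres ht hG.le).lt_of_ne' (mt (hpres G).1 hG.ne')

theorem le_indepNum_map_iff [Fintype V] (hφ : Monotone φ)
    (hpres : ∀ G, (φ G).indepNum = t ↔ G.indepNum = t) (ht : 1 ≤ t) (htV : t ≤ Fintype.card V)
    {G : SimpleGraph V} : t ≤ (φ G).indepNum ↔ t ≤ G.indepNum := by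
  simp only [le_iff_lt_or_eq, lt_indepNum_map_iff hφ hpres ht htV, eq_comm (a := t), hpres]

end Thresholds

section LinearMaps

variable {V : Type*} {φ : SimpleGraph V → SimpleGraph V}

theorem IsLinearMap'.monotone (hφ : IsLinearMap' φ) : Monotone φ := by
  intro G H hGH
  rw [← sup_eq_right.2 hGH, hφ]
  exact le_sup_left

variable [Finite V] {k : ℕ}

theorem eq_of_isIndepSet_map_cliqueCompl (hφ : IsLinearMap' φ) (hk : 2 ≤ k)
    (hpres : ∀ G, k ≤ (φ G).indepNum ↔ k ≤ G.indepNum) {S S' T : Finset V}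
    (hS : #S = k) (hS' : #S' = k) (hT : #T = k)
    (h : (φ (cliqueCompl S)).IsIndepSet (T : Set V))
    (h' : (φ (cliqueCompl S')).IsIndepSet (T : Set V)) : S = S' := by
  have hsup : k ≤ (φ (cliqueCompl S ⊔ cliqueCompl S')).indepNum := by
    refine le_indepNum_iff_exists_isNIndepSet.2 ⟨T, ?_, hT⟩
    rw [← le_cliqueCompl_iff_isIndepSet] at h h' ⊢
    exact (hφ _ _).trans_le (sup_le h h')
  obtain ⟨U, hU⟩ := le_indepNum_iff_exists_isNIndepSet.1 ((hpres _).1 hsup)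
  have hUk : #U = k := hU.card_eq
  have hUnontrivial : (U : Set V).Nontrivial := one_lt_card_iff_nontrivial.1 (by omega)
  have hUS : U ⊆ S := coe_subset.1 (subset_of_isIndepSet_cliqueCompl hUnontrivial
    (isIndepSet_anti le_sup_left hU.isIndepSet))
  have hUS' : U ⊆ S' := coe_subset.1 (subset_of_isIndepSet_cliqueCompl hUnontrivial
    (isIndepSet_anti le_sup_right hU.isIndepSet))
  exact (eq_of_subset_of_card_le hUS (by omega)).symm.trans
    (eq_of_subset_of_card_le hUS' (by omega))

theorem exists_bijOn_isIndepSet_map_cliqueCompl (hφ : IsLinearMap' φ) (hk : 2 ≤ k)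
    (hpres : ∀ G, k ≤ (φ G).indepNum ↔ k ≤ G.indepNum) :
    ∃ g : Finset V → Finset V, Set.BijOn g (Set.powersetCard V k) (Set.powersetCard V k) ∧
      ∀ S : Finset V, #S = k → (φ (cliqueCompl S)).IsIndepSet (g S : Set V) := by
  have hex : ∀ S : Finset V, #S = k → ∃ T, (φ (cliqueCompl S)).IsNIndepSet k T := by
    intro S hS
    have hkS : k ≤ (cliqueCompl (S : Set V)).indepNum :=
      hS ▸ (le_cliqueCompl_iff_isIndepSet.1 le_rfl).card_le_indepNum
    exact le_indepNum_iff_exists_isNIndepSet.1 ((hpres _).2 hkS)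
  choose! g hg using hex
  have hmaps : Set.MapsTo g (Set.powersetCard V k) (Set.powersetCard V k) :=
    fun S hS ↦ (hg S hS).card_eq
  have hinj : Set.InjOn g (Set.powersetCard V k) := fun S hS S' hS' hgS ↦
    eq_of_isIndepSet_map_cliqueCompl hφ hk hpres hS hS' (hg S hS).card_eq
      (hg S hS).isIndepSet (hgS ▸ (hg S' hS').isIndepSet)
  exact ⟨g, ((Set.toFinite _).injOn_iff_bijOn_of_mapsTo hmaps).1 hinj,
    fun S hS ↦ (hg S hS).isIndepSet⟩

end LinearMaps

section Main

variable {V : Type*} [Fintype V] {φ : SimpleGraph V → SimpleGraph V}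

theorem edgeSet_map_singleEdge_subsingleton {k : ℕ} (hφ : IsLinearMap' φ) (hk : 2 ≤ k)
    (hkV : k < Fintype.card V) (hpres : ∀ G, k ≤ (φ G).indepNum ↔ k ≤ G.indepNum)
    {i j : V} (hij : i ≠ j) : (φ (singleEdge i j)).edgeSet.Subsingleton := by
  classical
  obtain ⟨g, hg, hindep⟩ := exists_bijOn_isIndepSet_map_cliqueCompl hφ hk hpres
  have hsubset_iff : ∀ e ∈ (φ (singleEdge i j)).edgeSet, ∀ S, #S = k →
      (e.toFinset ⊆ g S ↔ {i, j} ⊆ S) := by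
    intro e he S hS
    have hcard : #e.toFinset = 2 := card_toFinset_of_mem_edgeSet he
    refine subset_map_iff_of_bijOn_powersetCard hg (hcard.trans (card_pair hij).symm)
      (hcard.trans_le hk) (fun S hS heS ↦ ?_) hS
    by_contra hijS
    rw [insert_subset_iff, singleton_subset_iff] at hijS
    have hle : φ (singleEdge i j) ≤ φ (cliqueCompl S) :=
      hφ.monotone ((singleEdge_le_cliqueCompl_iff hij).2 hijS)
    exact not_toFinset_subset_of_isIndepSet (hindep S hS) (SimpleGraph.edgeSet_mono hle he) heS
  intro e he f hf
  refine (eq_of_toFinset_subset_of_mem_edgeSet hf he ?_).symm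
  refine subset_of_forall_card_eq_imp ((card_toFinset_of_mem_edgeSet he).trans_le hk) hkV ?_
  intro T hT heT
  obtain ⟨S, hS, rfl⟩ := hg.surjOn hT
  exact (hsubset_iff f hf S hS).2 ((hsubset_iff e he S hS).1 heT)

theorem stmt7_general {t : ℕ} (ht : 1 ≤ t) (htV : t < Fintype.card V) (hφ : IsLinearMap' φ)
    (hpres : ∀ G : SimpleGraph V, indepNum (φ G) = t ↔ indepNum G = t) {i j : V} (hij : i ≠ j) :
    (φ (singleEdge i j)).edgeSet.Subsingleton := by
  simp only [indepNum_eq_simpleGraph_indepNum] at hpres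
  obtain hlt | hge := lt_or_ge (t + 1) (Fintype.card V)
  · exact edgeSet_map_singleEdge_subsingleton hφ (Nat.succ_le_succ ht) hlt
      (fun _ ↦ lt_indepNum_map_iff hφ.monotone hpres ht htV.le) hij
  obtain htwo | hone := le_or_gt 2 t
  · exact edgeSet_map_singleEdge_subsingleton hφ htwo htV
      (fun _ ↦ le_indepNum_map_iff hφ.monotone hpres ht htV.le) hij
  · exact edgeSet_subsingleton_of_card_le_two (by omega)

end Main

theorem stmt7 (n t : ℕ) (ht : 1 ≤ t) (htn : t ≤ n - 1)
    (φ : SimpleGraph (Fin n) → SimpleGraph (Fin n)) (hφ : IsCompleteLinearMap φ)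
    (hpres : ∀ G : SimpleGraph (Fin n), indepNum (φ G) = t ↔ indepNum G = t) :
    ∀ i j : Fin n, i ≠ j →
      ∀ e ∈ (φ (singleEdge i j)).edgeSet, ∀ f ∈ (φ (singleEdge i j)).edgeSet,
        e ≠ f → ∃ v : Fin n, v ∈ e ∧ v ∈ f := by
  intro i j hij e he f hf hef
  exact absurd (stmt7_general ht (by rw [Fintype.card_fin]; omega) hφ.1 hpres hij he hf) hef
end
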